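/- arXiv:1811.08475 — 3 statements merged into one kernel-verified Lean document; each statement's English description precedes it below -/
import Mathlib

section
/- (Extended Schur complement lemma.) Let A ∈ ℝ^{p×q} and let P' ∈ 𝕊^q be symmetric. The following are equivalent: (1) there exists a symmetric matrix P ∈ 𝕊^p with P ≻ 0 such that Aᵀ·P·A − P' ⪯ 0; (2) there exist a matrix G ∈ ℝ^{p×p} and a symmetric matrix P ∈ 𝕊^p with P ≻ 0 such that the block matrix [[P', Aᵀ·Gᵀ],[G·A, G + Gᵀ − P]] is positive semidefinite. -/
open Matrix

/-- Extended Schur complement lemma. -/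
theorem stmt7 {p q : ℕ} (A : Matrix (Fin p) (Fin q) ℝ)
    (P' : Matrix (Fin q) (Fin q) ℝ) (hP' : P'.IsSymm) :
    (∃ P : Matrix (Fin p) (Fin p) ℝ, P.PosDef ∧ (P' - Aᵀ * P * A).PosSemidef) ↔
    (∃ (G : Matrix (Fin p) (Fin p) ℝ) (P : Matrix (Fin p) (Fin p) ℝ), P.PosDef ∧
      (Matrix.fromBlocks P' (Aᵀ * Gᵀ) (G * A) (G + Gᵀ - P)).PosSemidef) := by
  constructor
  · rintro ⟨P, hP, h⟩
    refine ⟨P, P, hP, ?_⟩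
    have hs : Pᵀ = P := by simpa [Matrix.IsHermitian, conjTranspose_eq_transpose_of_trivial] using hP.1
    have hu : IsUnit P.det := (Matrix.isUnit_iff_isUnit_det P).1 hP.isUnit
    haveI : Invertible P := hP.isUnit.invertible
    have e : P + Pᵀ - P = P := by rw [hs]; abel
    have e2 : P * A = (Aᵀ * Pᵀ)ᴴ := by
      simp [conjTranspose_eq_transpose_of_trivial, Matrix.transpose_mul]
    rw [e, e2, Matrix.PosDef.fromBlocks₂₂ _ _ hP, ← e2, hs]
    have e3 : Aᵀ * P * P⁻¹ * (P * A) = Aᵀ * P * A := by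
      rw [Matrix.mul_nonsing_inv_cancel_right _ _ hu, Matrix.mul_assoc]
    rw [e3]
    exact h
  · rintro ⟨G, P, hP, h⟩
    refine ⟨P, hP, ?_⟩
    have := h.conjTranspose_mul_mul_same (Matrix.fromRows (1 : Matrix (Fin q) (Fin q) ℝ) (-A))
    convert this using 1
    rw [conjTranspose_eq_transpose_of_trivial, Matrix.transpose_fromRows,
      Matrix.fromCols_mul_fromBlocks, Matrix.fromCols_mul_fromRows]
    simp only [Matrix.transpose_one, Matrix.transpose_neg, Matrix.one_mul, Matrix.mul_one,
      Matrix.neg_mul, Matrix.mul_neg, Matrix.mul_add, Matrix.add_mul, Matrix.mul_sub,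
      Matrix.sub_mul, Matrix.mul_assoc]
    abel
end

section
/- Let A₀ ∈ ℝ^{d×d} and M ∈ 𝕊^d with M ⪰ 0, and define the affine map H(S) := A₀·S·A₀ᵀ + M on symmetric matrices. Suppose S₀ ∈ 𝕊^d satisfies S₀ ⪰ 0 and H(S₀) ⪯ S₀. Then the iterates satisfy 0 ⪯ ⋯ ⪯ H^{k+1}(S₀) ⪯ H^k(S₀) ⪯ ⋯ ⪯ H(S₀) ⪯ S₀ for all k, the sequence (H^k(S₀))_{k∈ℕ} converges to a matrix S̄ satisfying H(S̄) = S̄ and 0 ⪯ S̄ ⪯ S₀, and consequently Tr(Λ·S̄) ≤ Tr(Λ·S₀) for every symmetric Λ ⪰ 0. -/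
open Matrix Filter

lemma aux_trace {d : ℕ} {L D : Matrix (Fin d) (Fin d) ℝ} (hL : L.PosSemidef) (hD : D.PosSemidef) :
    0 ≤ (L * D).trace := by
  obtain ⟨B, rfl⟩ : ∃ B : Matrix (Fin d) (Fin d) ℝ, L = Bᴴ * B := by
    open scoped MatrixOrder in
    exact CStarAlgebra.nonneg_iff_eq_star_mul_self.mp (Matrix.nonneg_iff_posSemidef.mpr hL)
  rw [Matrix.mul_assoc, Matrix.trace_mul_comm]
  exact (hD.mul_mul_conjTranspose_same B).trace_nonneg

lemma aux_closed {d : ℕ} {u : ℕ → Matrix (Fin d) (Fin d) ℝ} {L : Matrix (Fin d) (Fin d) ℝ}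
    (hu : ∀ k, (u k).PosSemidef) (h : Tendsto u atTop (nhds L)) : L.PosSemidef := by
  refine .of_dotProduct_mulVec_nonneg ?_ fun x => ?_
  · have h2 : Tendsto (fun k => (u k)ᴴ) atTop (nhds Lᴴ) :=
      ((continuous_id.matrix_conjTranspose).tendsto L).comp h
    have h3 : (fun k => (u k)ᴴ) = u := funext fun k => (hu k).1
    rw [h3] at h2
    exact tendsto_nhds_unique h2 h
  · have hc : Continuous fun S : Matrix (Fin d) (Fin d) ℝ => star x ⬝ᵥ (S *ᵥ x) := by fun_prop
    exact ge_of_tendsto' ((hc.tendsto L).comp h) fun k => (hu k).dotProduct_mulVec_nonneg x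

lemma aux_conv {d : ℕ} {u : ℕ → Matrix (Fin d) (Fin d) ℝ}
    (hu : ∀ k, (u k).PosSemidef) (hd : ∀ k, (u k - u (k+1)).PosSemidef) :
    ∃ L, Tendsto u atTop (nhds L) := by
  have hq : ∀ x : Fin d → ℝ, ∃ l, Tendsto (fun k => x ⬝ᵥ (u k *ᵥ x)) atTop (nhds l) := by
    intro x
    refine ⟨_, tendsto_atTop_ciInf (antitone_nat_of_succ_le fun k => ?_) ⟨0, ?_⟩⟩
    · have := (hd k).dotProduct_mulVec_nonneg x
      simp only [star_trivial, sub_mulVec, dotProduct_sub] at this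
      linarith
    · rintro _ ⟨k, rfl⟩
      exact (hu k).dotProduct_mulVec_nonneg x
  choose q hq using hq
  let e : Fin d → Fin d → ℝ := fun i => Pi.single i 1
  refine ⟨Matrix.of fun i j => (q (e i + e j) - q (e i) - q (e j)) / 2, ?_⟩
  refine tendsto_pi_nhds.mpr fun i => tendsto_pi_nhds.mpr fun j => ?_
  have := (((hq (e i + e j)).sub (hq (e i))).sub (hq (e j))).div_const 2
  refine this.congr fun k => ?_
  have hs : u k j i = u k i j := by simpa using (hu k).1.apply i j
  simp [e, mulVec_add, add_dotProduct, dotProduct_add, hs]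
  ring

theorem stmt9 {d : ℕ} (A₀ M : Matrix (Fin d) (Fin d) ℝ) (hM : M.PosSemidef)
    (H : Matrix (Fin d) (Fin d) ℝ → Matrix (Fin d) (Fin d) ℝ)
    (hH : ∀ S, H S = A₀ * S * A₀ᵀ + M)
    (S₀ : Matrix (Fin d) (Fin d) ℝ) (hS₀ : S₀.PosSemidef)
    (hdec : (S₀ - H S₀).PosSemidef) :
    -- the iterates form a nonincreasing chain of PSD matrices below `S₀`
    (∀ k, (H^[k] S₀).PosSemidef ∧ (H^[k] S₀ - H^[k + 1] S₀).PosSemidef) ∧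
    -- the iterates converge to a fixed point `S̄` with `0 ⪯ S̄ ⪯ S₀`
    ∃ Sbar : Matrix (Fin d) (Fin d) ℝ,
      Tendsto (fun k => H^[k] S₀) atTop (nhds Sbar) ∧
      H Sbar = Sbar ∧ Sbar.PosSemidef ∧ (S₀ - Sbar).PosSemidef ∧
      -- consequently `Tr(Λ·S̄) ≤ Tr(Λ·S₀)` for every symmetric `Λ ⪰ 0`
      ∀ Λ : Matrix (Fin d) (Fin d) ℝ, Λ.PosSemidef →
        (Λ * Sbar).trace ≤ (Λ * S₀).trace := by
  have hA : ∀ S : Matrix (Fin d) (Fin d) ℝ, S.PosSemidef → (A₀ * S * A₀ᵀ).PosSemidef := by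
    intro S hS
    simpa using hS.mul_mul_conjTranspose_same A₀
  have h1 : ∀ k, (H^[k] S₀).PosSemidef ∧ (H^[k] S₀ - H^[k + 1] S₀).PosSemidef := by
    intro k
    induction k with
    | zero => exact ⟨hS₀, hdec⟩
    | succ k ih =>
      refine ⟨?_, ?_⟩
      · rw [Function.iterate_succ_apply', hH]
        exact (hA _ ih.1).add hM
      · have := hA _ ih.2
        rw [Function.iterate_succ_apply' H (k+1), Function.iterate_succ_apply' H k]
        rw [Function.iterate_succ_apply' H k] at this
        rw [hH (H (H^[k] S₀))]
        nth_rewrite 1 [hH (H^[k] S₀)]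
        simpa [Matrix.mul_sub, Matrix.sub_mul] using this
  have h2 : ∀ k, (S₀ - H^[k] S₀).PosSemidef := by
    intro k
    induction k with
    | zero => simpa using Matrix.PosSemidef.zero
    | succ k ih => simpa using ih.add (h1 k).2
  obtain ⟨L, hL⟩ := aux_conv (fun k => (h1 k).1) (fun k => (h1 k).2)
  have h3 : (S₀ - L).PosSemidef := aux_closed h2 (hL.const_sub S₀)
  refine ⟨h1, L, hL, ?_, aux_closed (fun k => (h1 k).1) hL, h3, fun Λ hΛ => ?_⟩
  · have hc : Continuous H := by
      rw [funext hH]; fun_prop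
    have h4 : Tendsto (fun k => H^[k+1] S₀) atTop (nhds (H L)) := by
      simp only [Function.iterate_succ_apply']
      exact (hc.tendsto L).comp hL
    exact tendsto_nhds_unique h4 (hL.comp (tendsto_add_atTop_nat 1))
  · have := aux_trace hΛ h3
    rw [Matrix.mul_sub, Matrix.trace_sub] at this
    linarith
end

section
/- Let F ∈ ℝ^{m×n} and ρ > 0. There exists a matrix G ∈ ℝ^{n×n} such that the block matrix [[ρ·Iₘ, F·Gᵀ],[G·Fᵀ, G + Gᵀ − Iₙ]] is positive semidefinite if and only if Fᵀ·F ⪯ ρ·Iₙ (equivalently, F·Fᵀ ⪯ ρ·Iₘ); in the forward direction one may take G = Iₙ. -/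
open Matrix

theorem aux22 {n m : ℕ} (F : Matrix (Fin m) (Fin n) ℝ) (ρ : ℝ) :
    (Matrix.fromBlocks (ρ • (1 : Matrix (Fin m) (Fin m) ℝ)) F Fᵀ
      (1 : Matrix (Fin n) (Fin n) ℝ)).PosSemidef ↔
    (ρ • (1 : Matrix (Fin m) (Fin m) ℝ) - F * Fᵀ).PosSemidef := by
  let : Invertible (1 : Matrix (Fin n) (Fin n) ℝ) := invertibleOne
  have h := Matrix.PosDef.fromBlocks₂₂ (ρ • (1 : Matrix (Fin m) (Fin m) ℝ)) F
    (Matrix.PosDef.one (n := Fin n) (R := ℝ))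
  simpa [Matrix.conjTranspose_eq_transpose_of_trivial] using h

theorem aux11 {n m : ℕ} (F : Matrix (Fin m) (Fin n) ℝ) (ρ : ℝ) (hρ : 0 < ρ) :
    (Matrix.fromBlocks (ρ • (1 : Matrix (Fin m) (Fin m) ℝ)) F Fᵀ
      (1 : Matrix (Fin n) (Fin n) ℝ)).PosSemidef ↔
    (ρ • (1 : Matrix (Fin n) (Fin n) ℝ) - Fᵀ * F).PosSemidef := by
  have hA : (ρ • (1 : Matrix (Fin m) (Fin m) ℝ)).PosDef := Matrix.PosDef.one.smul hρ
  letI : Invertible (ρ • (1 : Matrix (Fin m) (Fin m) ℝ)) := hA.isUnit.invertible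
  have h := Matrix.PosDef.fromBlocks₁₁ F (1 : Matrix (Fin n) (Fin n) ℝ) hA
  have hinv : (ρ • (1 : Matrix (Fin m) (Fin m) ℝ))⁻¹ = ρ⁻¹ • 1 := by
    apply Matrix.inv_eq_right_inv
    simp [smul_smul, hρ.ne']
  rw [hinv, Matrix.conjTranspose_eq_transpose_of_trivial] at h
  rw [h]
  have e : ρ • (1 : Matrix (Fin n) (Fin n) ℝ) - Fᵀ * F
      = ρ • (1 - Fᵀ * (ρ⁻¹ • (1 : Matrix (Fin m) (Fin m) ℝ)) * F) := by
    simp [smul_sub, smul_smul, hρ.ne']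
  constructor
  · intro h1
    rw [e]
    exact h1.smul hρ.le
  · intro h1
    rw [e] at h1
    have h2 := h1.smul (inv_pos.2 hρ).le
    rwa [smul_smul, inv_mul_cancel₀ hρ.ne', one_smul] at h2

theorem auxG {n m : ℕ} (F : Matrix (Fin m) (Fin n) ℝ) (ρ : ℝ) (G : Matrix (Fin n) (Fin n) ℝ)
    (h : (Matrix.fromBlocks (ρ • (1 : Matrix (Fin m) (Fin m) ℝ)) (F * Gᵀ) (G * Fᵀ)
          (G + Gᵀ - (1 : Matrix (Fin n) (Fin n) ℝ))).PosSemidef) :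
    (ρ • (1 : Matrix (Fin m) (Fin m) ℝ) - F * Fᵀ).PosSemidef := by
  have h1 := h.mul_mul_conjTranspose_same (Matrix.fromCols (1 : Matrix (Fin m) (Fin m) ℝ) (-F))
  convert h1 using 1
  rw [Matrix.conjTranspose_eq_transpose_of_trivial, Matrix.transpose_fromCols,
    Matrix.fromCols_mul_fromBlocks, Matrix.fromCols_mul_fromRows]
  simp only [Matrix.one_mul, Matrix.transpose_one, Matrix.mul_one, Matrix.transpose_neg,
    Matrix.neg_mul, Matrix.mul_neg, Matrix.mul_add, Matrix.add_mul, Matrix.mul_sub,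
    Matrix.sub_mul, Matrix.mul_assoc]
  abel

theorem stmt17 {n m : ℕ} (F : Matrix (Fin m) (Fin n) ℝ) (ρ : ℝ) (hρ : 0 < ρ) :
    -- existence of `G` making the block matrix PSD iff `Fᵀ·F ⪯ ρ·Iₙ`
    ((∃ G : Matrix (Fin n) (Fin n) ℝ,
        (Matrix.fromBlocks (ρ • (1 : Matrix (Fin m) (Fin m) ℝ)) (F * Gᵀ) (G * Fᵀ)
          (G + Gᵀ - (1 : Matrix (Fin n) (Fin n) ℝ))).PosSemidef) ↔
      (ρ • (1 : Matrix (Fin n) (Fin n) ℝ) - Fᵀ * F).PosSemidef) ∧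
    -- equivalently, `F·Fᵀ ⪯ ρ·Iₘ`
    ((ρ • (1 : Matrix (Fin n) (Fin n) ℝ) - Fᵀ * F).PosSemidef ↔
      (ρ • (1 : Matrix (Fin m) (Fin m) ℝ) - F * Fᵀ).PosSemidef) ∧
    -- in the forward direction one may take `G = Iₙ`
    ((ρ • (1 : Matrix (Fin n) (Fin n) ℝ) - Fᵀ * F).PosSemidef →
      (Matrix.fromBlocks (ρ • (1 : Matrix (Fin m) (Fin m) ℝ))
        (F * (1 : Matrix (Fin n) (Fin n) ℝ)ᵀ) ((1 : Matrix (Fin n) (Fin n) ℝ) * Fᵀ)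
        ((1 : Matrix (Fin n) (Fin n) ℝ) + (1 : Matrix (Fin n) (Fin n) ℝ)ᵀ -
          (1 : Matrix (Fin n) (Fin n) ℝ))).PosSemidef) := by
  have hE := (aux11 F ρ hρ).symm.trans (aux22 F ρ)
  have h3 : (ρ • (1 : Matrix (Fin n) (Fin n) ℝ) - Fᵀ * F).PosSemidef →
      (Matrix.fromBlocks (ρ • (1 : Matrix (Fin m) (Fin m) ℝ))
        (F * (1 : Matrix (Fin n) (Fin n) ℝ)ᵀ) ((1 : Matrix (Fin n) (Fin n) ℝ) * Fᵀ)
        ((1 : Matrix (Fin n) (Fin n) ℝ) + (1 : Matrix (Fin n) (Fin n) ℝ)ᵀ -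
          (1 : Matrix (Fin n) (Fin n) ℝ))).PosSemidef := by
    intro h
    simpa using (aux11 F ρ hρ).2 h
  exact ⟨⟨fun ⟨G, hG⟩ => hE.2 (auxG F ρ G hG), fun h => ⟨1, h3 h⟩⟩, hE, h3⟩
end
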